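/- Let Q ⊆ ℝⁿ be a rational polyhedron and D ⊆ ℤⁿ a finite set. Then the D-split closure SC_D(Q) := ⋂_{d ∈ D} conv({x ∈ Q : d·x ∈ ℤ}) is again a rational polyhedron; in particular, for a single d ∈ ℤⁿ, conv({x ∈ Q : d·x ∈ ℤ}) is a rational polyhedron. -/

import Mathlib

/-!
By Minkowski–Weyl over `ℚ`, a rational polyhedron is `Q = conv V + cone R` with `V`, `R` finite and
rational. Both directions come from cones: Fourier–Motzkin elimination adds one generator at a time
to a cone given by inequalities, and biduality turns this into generators for a system of
inequalities.

Let `Λ` be the group of points where finitely many rational functionals are integral. After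
scaling, `R ⊆ Λ`. Replacing the coefficients of the generators by their fractional parts moves a
point of `Q ∩ Λ` by an integer combination of `R`, hence within `Λ`, into the polytope
`B = conv V + ∑ [0, 1] • r`; therefore `conv (Q ∩ Λ) = conv (B ∩ Λ) + cone R`. As `B` is bounded,
the functionals take finitely many integer values on it, so `B ∩ Λ` is a finite union of rational
polytopes.
-/

open Set

/-- A rational polyhedron in `ℝⁿ`: the solution set of a finite system of linear
inequalities with rational data. -/
def IsRationalPolyhedron {n : ℕ} (Q : Set (Fin n → ℝ)) : Prop :=
  ∃ (m : ℕ) (A : Matrix (Fin m) (Fin n) ℚ) (b : Fin m → ℚ),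
    Q = {x | ∀ i, ∑ j, (A i j : ℝ) * x j ≤ (b i : ℝ)}

/-- The `D`-split closure of a set `Q ⊆ ℝⁿ` for a finite set `D` of integer directions. -/
def splitClosureD {n : ℕ} (D : Finset (Fin n → ℤ)) (Q : Set (Fin n → ℝ)) :
    Set (Fin n → ℝ) :=
  ⋂ d ∈ D, convexHull ℝ {x ∈ Q | ∃ z : ℤ, ∑ i, (d i : ℝ) * x i = (z : ℝ)}

open PointedCone Bornology
open scoped Matrix Pointwise

section RationalPoints

variable {K : Type*} [Field K] {k : Subfield K} {ι : Type*}

/-- The `k`-rational points of the coordinate space `ι → K`, for a subfield `k` of `K`. -/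
def rationalPoints (k : Subfield K) (ι : Type*) : Submodule k (ι → K) where
  carrier := {v | ∀ i, v i ∈ k}
  zero_mem' _ := zero_mem k
  add_mem' hv hw i := add_mem (hv i) (hw i)
  smul_mem' c _ hv i := mul_mem c.2 (hv i)

lemma smul_mem_rationalPoints {c : K} (hc : c ∈ k) {v : ι → K} (hv : v ∈ rationalPoints k ι) :
    c • v ∈ rationalPoints k ι :=
  (rationalPoints k ι).smul_mem ⟨c, hc⟩ hv

lemma dotProduct_mem_of_mem_rationalPoints [Fintype ι] {v w : ι → K}
    (hv : v ∈ rationalPoints k ι) (hw : w ∈ rationalPoints k ι) : v ⬝ᵥ w ∈ k :=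
  sum_mem fun i _ => mul_mem (hv i) (hw i)

lemma single_mem_rationalPoints [DecidableEq ι] (i : ι) {c : K} (hc : c ∈ k) :
    Pi.single i c ∈ rationalPoints k ι := by
  intro j
  obtain rfl | hj := eq_or_ne j i
  · simpa using hc
  · simp [hj]

lemma vecCons_mem_rationalPoints {n : ℕ} {c : K} {v : Fin n → K} (hc : c ∈ k)
    (hv : v ∈ rationalPoints k (Fin n)) :
    Matrix.vecCons c v ∈ rationalPoints k (Fin (n + 1)) :=
  Fin.cases hc hv

end RationalPoints

section FourierMotzkin

variable {K : Type*} [Field K] [LinearOrder K]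
variable {M N : Type*} [AddCommGroup M] [Module K M] [AddCommGroup N] [Module K N]

/-- The functionals produced from `F` by Fourier–Motzkin elimination in the direction `r`: those
nonnegative at `r`, and, for each pair of functionals of opposite strict signs at `r`, their
positive combination that vanishes at `r`. -/
def fourierMotzkin (p : M →ₗ[K] N →ₗ[K] K) (F : Set M) (r : N) : Set M :=
  {a ∈ F | 0 ≤ p a r} ∪
    image2 (fun a b => p a r • b - p b r • a) {a ∈ F | 0 < p a r} {b ∈ F | p b r < 0}

variable {p : M →ₗ[K] N →ₗ[K] K} {F : Set M} {r : N}

lemma fourierMotzkin_finite (hF : F.Finite) : (fourierMotzkin p F r).Finite :=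
  (hF.sep _).union ((hF.sep _).image2 _ (hF.sep _))

lemma fourierMotzkin_subset_rationalPoints {ι : Type*} [Fintype ι] {k : Subfield K}
    {F : Set (ι → K)} {r : ι → K} (hF : F ⊆ rationalPoints k ι) (hr : r ∈ rationalPoints k ι) :
    fourierMotzkin (dotProductBilin K K) F r ⊆ rationalPoints k ι := by
  have hdot : ∀ a ∈ F, a ⬝ᵥ r ∈ k := fun a ha => dotProduct_mem_of_mem_rationalPoints (hF ha) hr
  rintro _ (⟨ha, -⟩ | ⟨a, ⟨ha, -⟩, b, ⟨hb, -⟩, rfl⟩)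
  · exact hF ha
  · exact sub_mem (smul_mem_rationalPoints (hdot a ha) (hF hb))
      (smul_mem_rationalPoints (hdot b hb) (hF ha))

variable [IsStrictOrderedRing K]

lemma dual_le_dual_fourierMotzkin : dual p F ≤ dual p (fourierMotzkin p F r) := by
  rintro x hx _ (⟨ha, -⟩ | ⟨a, ⟨ha, har⟩, b, ⟨hb, hbr⟩, rfl⟩)
  · exact hx ha
  · have hab : p b r * p a x ≤ p a r * p b x :=
      (mul_nonpos_of_nonpos_of_nonneg hbr.le (hx ha)).trans (mul_nonneg har.le (hx hb))
    simpa using hab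

lemma mem_dual_fourierMotzkin_self : r ∈ dual p (fourierMotzkin p F r) := by
  rintro _ (⟨-, har⟩ | ⟨a, -, b, -, rfl⟩)
  · exact har
  · simp [mul_comm]

lemma exists_sub_smul_mem_dual (hF : F.Finite) {x : N} (hx : x ∈ dual p (fourierMotzkin p F r)) :
    ∃ t : K, 0 ≤ t ∧ x - t • r ∈ dual p F := by
  have lower_le_upper :
      ∀ a ∈ F, 0 < p a r → ∀ b ∈ F, p b r < 0 → p b x / p b r ≤ p a x / p a r := by
    intro a ha har b hb hbr
    have h : p b r * p a x ≤ p a r * p b x := by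
      simpa using hx (Or.inr (mem_image2_of_mem ⟨ha, har⟩ ⟨hb, hbr⟩))
    rw [div_le_iff_of_neg hbr, div_mul_eq_mul_div, div_le_iff₀ har]
    linarith
  let lower : Set K := insert 0 ((fun b => p b x / p b r) '' {b ∈ F | p b r < 0})
  obtain ⟨t, ht_mem, ht⟩ :=
    lower.exists_max_image id (((hF.sep _).image _).insert 0) (insert_nonempty 0 _)
  refine ⟨t, ht 0 (mem_insert 0 _), fun a ha => ?_⟩
  rw [map_sub, map_smul, smul_eq_mul, sub_nonneg]
  rcases lt_trichotomy (p a r) 0 with har | har | har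
  · exact (div_le_iff_of_neg har).1 (ht _ (Or.inr (mem_image_of_mem _ ⟨ha, har⟩)))
  · simpa [har] using hx (Or.inl ⟨ha, har.ge⟩)
  · rw [← le_div_iff₀ har]
    obtain rfl | ⟨b, ⟨hb, hbr⟩, rfl⟩ := ht_mem
    · exact div_nonneg (hx (Or.inl ⟨ha, har.le⟩)) har.le
    · exact lower_le_upper a ha har b hb hbr

theorem hull_singleton_sup_dual (hF : F.Finite) (r : N) :
    hull K {r} ⊔ dual p F = dual p (fourierMotzkin p F r) := by
  refine le_antisymm (sup_le ?_ dual_le_dual_fourierMotzkin) fun x hx => ?_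
  · exact Submodule.span_le.2 (singleton_subset_iff.2 mem_dual_fourierMotzkin_self)
  · obtain ⟨t, ht, hxt⟩ := exists_sub_smul_mem_dual hF hx
    have htr : t • r ∈ hull K {r} := Submodule.mem_span_singleton.2 ⟨⟨t, ht⟩, rfl⟩
    exact add_sub_cancel (t • r) x ▸ Submodule.add_mem_sup htr hxt

end FourierMotzkin

section MinkowskiWeyl

variable {K : Type*} [Field K] [LinearOrder K] [IsStrictOrderedRing K] {k : Subfield K}
variable {ι : Type*} [Fintype ι]

lemma exists_dual_eq_bot (k : Subfield K) (ι : Type*) [Fintype ι] :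
    ∃ F : Set (ι → K), F.Finite ∧ F ⊆ rationalPoints k ι ∧ dual (dotProductBilin K K) F = ⊥ := by
  classical
  let E : Set (ι → K) := range fun i => Pi.single i 1
  have hE : E ⊆ rationalPoints k ι :=
    range_subset_iff.2 fun i => single_mem_rationalPoints i (one_mem k)
  refine ⟨E ∪ -E, (finite_range _).union (finite_range _).neg,
    union_subset hE fun v hv => neg_mem_iff.1 (hE hv), ?_⟩
  refine (Submodule.eq_bot_iff _).2 fun x hx => funext fun i => le_antisymm ?_ ?_
  · have h : -Pi.single i 1 ∈ E ∪ -E := Or.inr (by simp [E])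
    simpa using hx h
  · have h : Pi.single i 1 ∈ E ∪ -E := Or.inl (mem_range_self i)
    simpa using hx h

theorem exists_hull_eq_dual {G : Set (ι → K)} (hG : G.Finite) (hGk : G ⊆ rationalPoints k ι) :
    ∃ F : Set (ι → K), F.Finite ∧ F ⊆ rationalPoints k ι ∧
      hull K G = dual (dotProductBilin K K) F := by
  induction G, hG using Set.Finite.induction_on with
  | empty => simpa [eq_comm] using exists_dual_eq_bot k ι
  | @insert r G _ _ ih =>
    obtain ⟨hr, hGk⟩ := insert_subset_iff.1 hGk
    obtain ⟨F, hF, hFk, hGF⟩ := ih hGk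
    refine ⟨fourierMotzkin (dotProductBilin K K) F r, fourierMotzkin_finite hF,
      fourierMotzkin_subset_rationalPoints hFk hr, ?_⟩
    calc hull K (insert r G) = hull K {r} ⊔ hull K G := Submodule.span_insert r G
      _ = _ := by rw [hGF, hull_singleton_sup_dual hF]

theorem exists_dual_eq_hull {F : Set (ι → K)} (hF : F.Finite) (hFk : F ⊆ rationalPoints k ι) :
    ∃ G : Set (ι → K), G.Finite ∧ G ⊆ rationalPoints k ι ∧
      dual (dotProductBilin K K) F = hull K G := by
  obtain ⟨G, hG, hGk, hFG⟩ := exists_hull_eq_dual hF hFk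
  obtain ⟨H, -, -, hGH⟩ := exists_hull_eq_dual hG hGk
  -- `hull K G` is itself a dual cone, hence equal to its double dual, which is `dual F`.
  have dual_dual_dual (S : Set (ι → K)) :
      (dual (dotProductBilin K K) (dual (dotProductBilin K K)
        (dual (dotProductBilin K K) S : Set (ι → K)) : Set (ι → K)) : PointedCone K (ι → K)) =
        dual (dotProductBilin K K) S := by
    have hflip : (dotProductBilin K K : (ι → K) →ₗ[K] (ι → K) →ₗ[K] K).flip =
        dotProductBilin K K := LinearMap.ext₂ fun v w => dotProduct_comm w v
    simpa only [hflip] using dual_dual_flip_dual (p := dotProductBilin K K) S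
  refine ⟨G, hG, hGk, ?_⟩
  rw [hGH, ← dual_dual_dual H, ← hGH, dual_hull, ← hFG, dual_hull]

end MinkowskiWeyl

section Homogenization

variable {K : Type*} [Field K] [LinearOrder K] [IsStrictOrderedRing K] {n : ℕ}

/-- The cone over the generalized polytope `convexHull K V + hull K R`, which it meets at height
one; the height is the zeroth coordinate. -/
def homogenization (V R : Set (Fin n → K)) : PointedCone K (Fin (n + 1) → K) :=
  hull K (Matrix.vecCons 1 '' V ∪ Matrix.vecCons 0 '' R)

lemma vecCons_one_mem_hull_image {V : Set (Fin n → K)} {v : Fin n → K} :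
    Matrix.vecCons 1 v ∈ hull K (Matrix.vecCons 1 '' V) ↔ v ∈ convexHull K V := by
  constructor
  · intro hv
    obtain ⟨t, htV, c, hc⟩ := (Submodule.mem_span_image_iff_exists_fun _).1 hv
    replace hc : ∑ i : t, (c i : K) • Matrix.vecCons 1 (i : Fin n → K) = Matrix.vecCons 1 v := hc
    have hsum : ∑ i : t, (c i : K) = 1 := by
      simpa [Finset.sum_apply, -Nonneg.coe_smul] using congrFun hc 0
    have hcomb : ∑ i : t, (c i : K) • (i : Fin n → K) = v := by
      ext j
      simpa [Finset.sum_apply, -Nonneg.coe_smul] using congrFun hc j.succ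
    rw [← hcomb]
    exact (convex_convexHull K V).sum_mem (fun i _ => (c i).2) hsum
      fun i _ => subset_convexHull K V (htV i.2)
  · intro hv
    let C := hull K (Matrix.vecCons 1 '' V)
    refine convexHull_min (t := {v | Matrix.vecCons 1 v ∈ C})
      (fun v hv => subset_hull (mem_image_of_mem _ hv)) ?_ hv
    intro v hv w hw a b ha hb hab
    have h := add_mem (PointedCone.smul_mem C ha hv) (PointedCone.smul_mem C hb hw)
    simpa [hab] using h

lemma mem_hull_image_vecCons_zero {R : Set (Fin n → K)} {y : Fin (n + 1) → K} :
    y ∈ hull K (Matrix.vecCons 0 '' R) ↔ ∃ r ∈ hull K R, Matrix.vecCons 0 r = y := by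
  let cons₀ : (Fin n → K) →ₗ[{c : K // 0 ≤ c}] (Fin (n + 1) → K) :=
    { toFun := Matrix.vecCons 0
      map_add' := by simp
      map_smul' := fun c v => by ext i; cases i using Fin.cases <;> simp }
  change y ∈ Submodule.span _ (cons₀ '' R) ↔ _
  rw [Submodule.span_image, Submodule.mem_map]
  rfl

theorem vecCons_one_mem_homogenization {V R : Set (Fin n → K)} {x : Fin n → K} :
    Matrix.vecCons 1 x ∈ homogenization V R ↔
      x ∈ convexHull K V + (hull K R : Set (Fin n → K)) := by
  rw [homogenization, hull, Submodule.span_union, Submodule.mem_sup, Set.mem_add]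
  constructor
  · rintro ⟨y, hy, z, hz, hyz⟩
    obtain ⟨r, hr, rfl⟩ := mem_hull_image_vecCons_zero.1 hz
    have hy_eq : y = Matrix.vecCons 1 (x - r) := by
      rw [eq_sub_of_add_eq hyz]; simp
    exact ⟨x - r, vecCons_one_mem_hull_image.1 (hy_eq ▸ hy), r, hr, sub_add_cancel x r⟩
  · rintro ⟨v, hv, r, hr, rfl⟩
    exact ⟨_, vecCons_one_mem_hull_image.2 hv, _, mem_hull_image_vecCons_zero.2 ⟨r, hr, rfl⟩,
      by simp⟩

theorem exists_hull_eq_homogenization {k : Subfield K} {G : Set (Fin (n + 1) → K)}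
    (hG : G.Finite) (hGk : G ⊆ rationalPoints k (Fin (n + 1))) (hG₀ : ∀ g ∈ G, 0 ≤ g 0) :
    ∃ V R : Set (Fin n → K), V.Finite ∧ V ⊆ rationalPoints k (Fin n) ∧
      R.Finite ∧ R ⊆ rationalPoints k (Fin n) ∧ hull K G = homogenization V R := by
  have htail {g} (hg : g ∈ G) : Matrix.vecTail g ∈ rationalPoints k (Fin n) :=
    fun i => hGk hg i.succ
  refine ⟨(fun g => (g 0)⁻¹ • Matrix.vecTail g) '' {g ∈ G | 0 < g 0},
    Matrix.vecTail '' {g ∈ G | g 0 = 0}, (hG.sep _).image _, ?_, (hG.sep _).image _, ?_,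
    le_antisymm (Submodule.span_le.2 fun g hg => ?_) (Submodule.span_le.2 ?_)⟩
  · rintro _ ⟨g, ⟨hg, -⟩, rfl⟩
    exact smul_mem_rationalPoints (inv_mem (hGk hg 0)) (htail hg)
  · rintro _ ⟨g, ⟨hg, -⟩, rfl⟩
    exact htail hg
  · rcases (hG₀ g hg).eq_or_lt with hg₀ | hg₀
    · have hg_eq : Matrix.vecCons 0 (Matrix.vecTail g) = g := by
        rw [hg₀]; exact Matrix.cons_head_tail g
      exact subset_hull (Or.inr ⟨_, mem_image_of_mem _ ⟨hg, hg₀.symm⟩, hg_eq⟩)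
    · have hg_eq : g 0 • Matrix.vecCons 1 ((g 0)⁻¹ • Matrix.vecTail g) = g := by
        rw [Matrix.smul_cons, smul_inv_smul₀ hg₀.ne', smul_eq_mul, mul_one]
        exact Matrix.cons_head_tail g
      rw [← hg_eq]
      exact PointedCone.smul_mem _ hg₀.le
        (subset_hull (Or.inl (mem_image_of_mem _ (mem_image_of_mem _ ⟨hg, hg₀⟩))))
  · rintro _ (⟨_, ⟨g, ⟨hg, hg₀⟩, rfl⟩, rfl⟩ | ⟨_, ⟨g, ⟨hg, hg₀⟩, rfl⟩, rfl⟩)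
    · have hg_eq : Matrix.vecCons 1 ((g 0)⁻¹ • Matrix.vecTail g) = (g 0)⁻¹ • g := by
        rw [← Matrix.cons_head_tail g, Matrix.smul_cons]
        simp [Matrix.vecHead, hg₀.ne']
      rw [hg_eq]
      exact PointedCone.smul_mem _ (inv_nonneg.2 hg₀.le) (subset_hull hg)
    · have hg_eq : Matrix.vecCons 0 (Matrix.vecTail g) = g := by
        rw [← hg₀]; exact Matrix.cons_head_tail g
      rw [hg_eq]
      exact subset_hull hg

end Homogenization

section RationalPolyhedron

variable {n : ℕ} {P : Set (Fin n → ℝ)}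

/-- The points of `ℝⁿ` with rational coordinates. -/
noncomputable abbrev rationalVectors (n : ℕ) : Submodule (Rat.castHom ℝ).fieldRange (Fin n → ℝ) :=
  rationalPoints (Rat.castHom ℝ).fieldRange (Fin n)

lemma mem_rationalVectors_iff {v : Fin n → ℝ} :
    v ∈ rationalVectors n ↔ ∃ q : Fin n → ℚ, (fun i => (q i : ℝ)) = v := by
  simp only [funext_iff]
  exact Classical.skolem (p := fun i (q : ℚ) => (q : ℝ) = v i)

lemma IsRationalPolyhedron.of_dual {F : Set (Fin (n + 1) → ℝ)} (hF : F.Finite)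
    (hFq : F ⊆ rationalVectors (n + 1)) :
    IsRationalPolyhedron {x | Matrix.vecCons 1 x ∈ dual (dotProductBilin ℝ ℝ) F} := by
  obtain ⟨m, f, -, rfl⟩ := hF.fin_param
  choose q hq using fun i => mem_rationalVectors_iff.1 (hFq (mem_range_self i))
  refine ⟨m, fun i j => -q i j.succ, fun i => q i 0, ext fun x => ?_⟩
  have hineq (i : Fin m) : 0 ≤ f i ⬝ᵥ Matrix.vecCons 1 x ↔
      ∑ j : Fin n, ((-q i j.succ : ℚ) : ℝ) * x j ≤ q i 0 := by
    rw [← hq, dotProduct, Fin.sum_univ_succ]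
    simp [neg_le_iff_add_nonneg]
  simpa using forall_congr' hineq

theorem isRationalPolyhedron_iff_exists_dual :
    IsRationalPolyhedron P ↔ ∃ F : Set (Fin (n + 1) → ℝ), F.Finite ∧
      F ⊆ rationalVectors (n + 1) ∧
      P = {x | Matrix.vecCons 1 x ∈ dual (dotProductBilin ℝ ℝ) F} := by
  constructor
  · rintro ⟨m, A, b, rfl⟩
    refine ⟨range fun i => Matrix.vecCons (b i : ℝ) fun j => -(A i j : ℝ), finite_range _,
      range_subset_iff.2 fun i => ?_, ?_⟩
    · exact mem_rationalVectors_iff.2 ⟨Fin.cons (b i) fun j => -A i j, by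
        ext j; cases j using Fin.cases <;> simp⟩
    · ext x
      simp [dotProduct, Fin.sum_univ_succ]
  · rintro ⟨F, hF, hFq, rfl⟩
    exact .of_dual hF hFq

theorem isRationalPolyhedron_iff_exists_convexHull_add_hull :
    IsRationalPolyhedron P ↔ ∃ V R : Set (Fin n → ℝ),
      V.Finite ∧ V ⊆ rationalVectors n ∧ R.Finite ∧ R ⊆ rationalVectors n ∧
        P = convexHull ℝ V + (hull ℝ R : Set (Fin n → ℝ)) := by
  rw [isRationalPolyhedron_iff_exists_dual]
  constructor
  · rintro ⟨F, hF, hFq, rfl⟩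
    -- Requiring the height to be nonnegative excludes generators below height zero.
    let e₀ : Fin (n + 1) → ℝ := Matrix.vecCons 1 0
    obtain ⟨G, hG, hGq, hFG⟩ := exists_dual_eq_hull (hF.insert e₀)
      (insert_subset (vecCons_mem_rationalPoints (one_mem _) (zero_mem _)) hFq)
    have hG₀ : ∀ g ∈ G, 0 ≤ g 0 := fun g hg => by
      have h : g ∈ dual (dotProductBilin ℝ ℝ) (insert e₀ F) := hFG ▸ subset_hull hg
      simpa [e₀, Matrix.vecHead] using h (mem_insert e₀ F)
    obtain ⟨V, R, hV, hVq, hR, hRq, hGVR⟩ := exists_hull_eq_homogenization hG hGq hG₀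
    refine ⟨V, R, hV, hVq, hR, hRq, ext fun x => ?_⟩
    rw [← vecCons_one_mem_homogenization, ← hGVR, ← hFG]
    simp [e₀]
  · rintro ⟨V, R, hV, hVq, hR, hRq, rfl⟩
    obtain ⟨F, hF, hFq, hVRF⟩ := exists_hull_eq_dual
      (G := Matrix.vecCons 1 '' V ∪ Matrix.vecCons 0 '' R) (k := (Rat.castHom ℝ).fieldRange)
      ((hV.image _).union (hR.image _))
      (union_subset
        (image_subset_iff.2 fun v hv => vecCons_mem_rationalPoints (one_mem _) (hVq hv))
        (image_subset_iff.2 fun r hr => vecCons_mem_rationalPoints (zero_mem _) (hRq hr)))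
    refine ⟨F, hF, hFq, ext fun x => ?_⟩
    rw [← vecCons_one_mem_homogenization, homogenization, hVRF]
    rfl

namespace IsRationalPolyhedron

lemma convexHull_of_finite {V : Set (Fin n → ℝ)} (hV : V.Finite) (hVq : V ⊆ rationalVectors n) :
    IsRationalPolyhedron (convexHull ℝ V) :=
  isRationalPolyhedron_iff_exists_convexHull_add_hull.2
    ⟨V, ∅, hV, hVq, finite_empty, empty_subset _, by simp⟩

lemma add {Q : Set (Fin n → ℝ)} (hP : IsRationalPolyhedron P) (hQ : IsRationalPolyhedron Q) :
    IsRationalPolyhedron (P + Q) := by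
  obtain ⟨V, R, hV, hVq, hR, hRq, rfl⟩ := isRationalPolyhedron_iff_exists_convexHull_add_hull.1 hP
  obtain ⟨W, S, hW, hWq, hS, hSq, rfl⟩ := isRationalPolyhedron_iff_exists_convexHull_add_hull.1 hQ
  refine isRationalPolyhedron_iff_exists_convexHull_add_hull.2
    ⟨V + W, R ∪ S, hV.add hW, add_subset_iff.2 fun v hv w hw => add_mem (hVq hv) (hWq hw),
      hR.union hS, union_subset hRq hSq, ?_⟩
  rw [add_add_add_comm, convexHull_add, hull, hull, hull, Submodule.span_union, Submodule.coe_sup]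

lemma iInter {κ : Type*} [Finite κ] {P : κ → Set (Fin n → ℝ)}
    (hP : ∀ i, IsRationalPolyhedron (P i)) : IsRationalPolyhedron (⋂ i, P i) := by
  choose F hF hFq hPF using fun i => isRationalPolyhedron_iff_exists_dual.1 (hP i)
  refine isRationalPolyhedron_iff_exists_dual.2
    ⟨⋃ i, F i, finite_iUnion hF, iUnion_subset hFq, ?_⟩
  ext x
  simp [hPF, dual_iUnion]

lemma inter {Q : Set (Fin n → ℝ)} (hP : IsRationalPolyhedron P) (hQ : IsRationalPolyhedron Q) :
    IsRationalPolyhedron (P ∩ Q) := by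
  rw [inter_eq_iInter]
  exact iInter (Bool.forall_bool.2 ⟨hQ, hP⟩)

lemma hyperplane {a : Fin n → ℝ} (ha : a ∈ rationalVectors n) {c : ℝ}
    (hc : c ∈ (Rat.castHom ℝ).fieldRange) : IsRationalPolyhedron {x | a ⬝ᵥ x = c} := by
  let f : Fin (n + 1) → ℝ := Matrix.vecCons (-c) a
  have hf : f ∈ rationalVectors (n + 1) := vecCons_mem_rationalPoints (neg_mem hc) ha
  refine isRationalPolyhedron_iff_exists_dual.2 ⟨{f, -f}, toFinite _,
    pair_subset hf (neg_mem hf), ?_⟩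
  ext x
  have hle : a ⬝ᵥ x = c ↔ 0 ≤ f ⬝ᵥ Matrix.vecCons 1 x ∧ 0 ≤ -f ⬝ᵥ Matrix.vecCons 1 x := by
    simp [f, le_antisymm_iff, and_comm]
  simp only [mem_dual, mem_insert_iff, mem_singleton_iff, forall_eq_or_imp, forall_eq]
  exact hle

end IsRationalPolyhedron

lemma isRationalPolyhedron_parallelepiped {ι : Type*} [Fintype ι] {r : ι → Fin n → ℝ}
    (hr : ∀ i, r i ∈ rationalVectors n) : IsRationalPolyhedron (parallelepiped r) := by
  rw [parallelepiped_eq_sum_segment]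
  refine Finset.sum_induction _ _ (fun _ _ => .add) ?_ fun i _ => ?_
  · rw [← singleton_zero, ← convexHull_singleton (𝕜 := ℝ)]
    exact .convexHull_of_finite (finite_singleton 0) (singleton_subset_iff.2 (zero_mem _))
  · rw [← convexHull_pair]
    exact .convexHull_of_finite (toFinite _) (pair_subset (zero_mem _) (hr i))

end RationalPolyhedron

section Bounded

lemma isCompact_parallelepiped {ι E : Type*} [Fintype ι] [AddCommGroup E] [Module ℝ E]
    [TopologicalSpace E] [ContinuousAdd E] [ContinuousSMul ℝ E] (v : ι → E) :
    IsCompact (parallelepiped v) :=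
  isCompact_Icc.image (by fun_prop)

lemma eq_zero_of_isBounded_of_forall_add_smul_mem {E : Type*} [NormedAddCommGroup E]
    [NormedSpace ℝ E] {s : Set E} (hs : IsBounded s) {v r : E}
    (hray : ∀ t : ℝ, 0 ≤ t → v + t • r ∈ s) : r = 0 := by
  obtain ⟨C, hC⟩ := hs.exists_norm_le
  by_contra hr
  have hr' : 0 < ‖r‖ := norm_pos_iff.2 hr
  have hC₀ : 0 ≤ C := (norm_nonneg _).trans (hC _ (hray 0 le_rfl))
  let t := (C + ‖v‖ + 1) / ‖r‖
  have ht : 0 ≤ t := by positivity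
  have hlarge : ‖t • r‖ = C + ‖v‖ + 1 := by
    rw [norm_smul, Real.norm_of_nonneg ht, div_mul_cancel₀ _ hr'.ne']
  have hsmall : ‖t • r‖ ≤ C + ‖v‖ :=
    calc ‖t • r‖ = ‖(v + t • r) - v‖ := by rw [add_sub_cancel_left]
      _ ≤ ‖v + t • r‖ + ‖v‖ := norm_sub_le _ _
      _ ≤ C + ‖v‖ := by gcongr; exact hC _ (hray t ht)
  linarith

theorem IsRationalPolyhedron.exists_eq_convexHull_of_isBounded {n : ℕ} {P : Set (Fin n → ℝ)}
    (hP : IsRationalPolyhedron P) (hb : IsBounded P) :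
    ∃ V : Set (Fin n → ℝ), V.Finite ∧ V ⊆ rationalVectors n ∧ P = convexHull ℝ V := by
  obtain ⟨V, R, hV, hVq, -, -, rfl⟩ := isRationalPolyhedron_iff_exists_convexHull_add_hull.1 hP
  refine ⟨V, hV, hVq, ?_⟩
  obtain rfl | ⟨v, hv⟩ := V.eq_empty_or_nonempty
  · simp
  have hR : hull ℝ R = ⊥ := Submodule.span_eq_bot.2 fun r hr =>
    eq_zero_of_isBounded_of_forall_add_smul_mem hb fun t ht =>
      add_mem_add (subset_convexHull ℝ V hv) (PointedCone.smul_mem _ ht (subset_hull hr))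
  simp [hR]

end Bounded

lemma hull_smul {K M : Type*} [Field K] [LinearOrder K] [IsStrictOrderedRing K] [AddCommGroup M]
    [Module K M] {c : K} (hc : 0 < c) (S : Set M) : hull K (c • S) = hull K S :=
  Submodule.span_smul_eq_of_isUnit S (⟨c, hc.le⟩ : {c : K // 0 ≤ c})
    (Subtype.coe_ne_coe.1 hc.ne').isUnit

section ConvexHullInterAddSubgroup

variable {E : Type*} [AddCommGroup E] [Module ℝ E]

lemma fract_smul_add_floor_nsmul {t : ℝ} (ht : 0 ≤ t) (x : E) :
    Int.fract t • x + ⌊t⌋₊ • x = t • x := by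
  rw [← Nat.cast_smul_eq_nsmul ℝ, ← add_smul, natCast_floor_eq_intCast_floor ht,
    Int.fract_add_floor]

lemma convexHull_addSubmonoid (C : AddSubmonoid E) :
    convexHull ℝ (C : Set E) = hull ℝ (C : Set E) := by
  refine Subset.antisymm (convexHull_min subset_hull (PointedCone.convex _)) ?_
  have hzero : (0 : E) ∈ convexHull ℝ (C : Set E) := subset_convexHull ℝ _ C.zero_mem
  let M : AddSubmonoid E :=
    { carrier := convexHull ℝ (C : Set E)
      zero_mem' := hzero
      add_mem' := fun hx hy => by
        simpa only [← convexHull_add, AddSubmonoid.coe_add_self_eq] using add_mem_add hx hy }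
  let N : PointedCone ℝ E :=
    { M with
      smul_mem' := fun t x (hx : x ∈ M) => by
        have hfract : Int.fract (t : ℝ) • x ∈ M := (convex_convexHull ℝ _).smul_mem_of_zero_mem
          hzero hx ⟨Int.fract_nonneg _, (Int.fract_lt_one _).le⟩
        have hfloor : ⌊(t : ℝ)⌋₊ • x ∈ M := nsmul_mem hx _
        exact fract_smul_add_floor_nsmul t.2 x ▸ add_mem hfract hfloor }
  exact Submodule.span_le (p := N).2 (subset_convexHull ℝ _)

lemma hull_addSubmonoidClosure (S : Set E) :
    hull ℝ (AddSubmonoid.closure S : Set E) = hull ℝ S :=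
  le_antisymm (Submodule.span_le.2 Submodule.closure_subset_span)
    (Submodule.span_mono AddSubmonoid.subset_closure)

variable {ι : Type*} [Fintype ι] (r : ι → E)

lemma parallelepiped_add_addSubmonoidClosure :
    parallelepiped r + (AddSubmonoid.closure (range r) : Set E) = hull ℝ (range r) := by
  refine Subset.antisymm (add_subset_iff.2 fun x hx y hy => add_mem ?_ ?_) fun x hx => ?_
  · obtain ⟨c, hc, rfl⟩ := (mem_parallelepiped_iff r x).1 hx
    exact sum_mem fun i _ => PointedCone.smul_mem _ (hc.1 i) (subset_hull (mem_range_self i))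
  · exact hull_addSubmonoidClosure (range r) ▸ subset_hull hy
  · obtain ⟨c, rfl⟩ := (Submodule.mem_span_range_iff_exists_fun _).1 hx
    refine ⟨∑ i, Int.fract (c i : ℝ) • r i, ?_, ∑ i, ⌊(c i : ℝ)⌋₊ • r i, ?_, ?_⟩
    · exact (mem_parallelepiped_iff r _).2 ⟨_, ⟨fun i => Int.fract_nonneg _,
        fun i => (Int.fract_lt_one _).le⟩, rfl⟩
    · exact sum_mem fun i _ => nsmul_mem (AddSubmonoid.subset_closure (mem_range_self i)) _
    · refine Finset.sum_add_distrib.symm.trans ?_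
      exact Finset.sum_congr rfl fun i _ => fract_smul_add_floor_nsmul (c i).2 (r i)

lemma add_inter_addSubgroup {G : Type*} [AddGroup G] {A B : Set G} {Λ : AddSubgroup G}
    (hB : B ⊆ Λ) : (A + B) ∩ Λ = A ∩ Λ + B := by
  ext x
  constructor
  · rintro ⟨⟨a, ha, b, hb, rfl⟩, hab⟩
    exact add_mem_add ⟨ha, (AddSubgroup.add_mem_cancel_right Λ (hB hb)).1 hab⟩ hb
  · rintro ⟨a, ⟨ha, haΛ⟩, b, hb, rfl⟩
    exact ⟨add_mem_add ha hb, add_mem haΛ (hB hb)⟩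

theorem convexHull_add_hull_inter {r : ι → E} {Λ : AddSubgroup E} (hr : ∀ i, r i ∈ Λ)
    (A : Set E) :
    convexHull ℝ ((A + (hull ℝ (range r) : Set E)) ∩ Λ) =
      convexHull ℝ ((A + parallelepiped r) ∩ Λ) + (hull ℝ (range r) : Set E) := by
  have hC : (AddSubmonoid.closure (range r) : Set E) ⊆ Λ :=
    (AddSubmonoid.closure_le (S := Λ.toAddSubmonoid)).2 (range_subset_iff.2 hr)
  rw [← parallelepiped_add_addSubmonoidClosure, ← add_assoc, add_inter_addSubgroup hC,
    convexHull_add, convexHull_addSubmonoid, hull_addSubmonoidClosure,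
    parallelepiped_add_addSubmonoidClosure]

end ConvexHullInterAddSubgroup

section IntegralPoints

variable {n : ℕ} {κ : Type*} {A : Matrix κ (Fin n) ℝ}

/-- The points of `ℝⁿ` at which every row of `A` takes an integer value. -/
def integralPoints (A : Matrix κ (Fin n) ℝ) : AddSubgroup (Fin n → ℝ) where
  carrier := {x | ∀ i, ∃ z : ℤ, A i ⬝ᵥ x = z}
  zero_mem' _ := ⟨0, by simp⟩
  add_mem' hx hy i := by
    obtain ⟨a, ha⟩ := hx i
    obtain ⟨b, hb⟩ := hy i
    exact ⟨a + b, by simp [dotProduct_add, ha, hb]⟩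
  neg_mem' hx i := by
    obtain ⟨a, ha⟩ := hx i
    exact ⟨-a, by simp [ha]⟩

lemma exists_nat_mul_eq_intCast [Finite κ] (q : κ → ℚ) :
    ∃ N : ℕ, 0 < N ∧ ∀ i, ∃ z : ℤ, N * q i = z := by
  have := Fintype.ofFinite κ
  refine ⟨∏ i, (q i).den, Finset.prod_pos fun i _ => (q i).den_pos, fun i => ?_⟩
  obtain ⟨c, hc⟩ := Finset.dvd_prod_of_mem (fun i => (q i).den) (Finset.mem_univ i)
  refine ⟨c * (q i).num, ?_⟩
  rw [hc]
  push_cast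
  rw [mul_right_comm, Rat.den_mul_eq_num, mul_comm]

lemma exists_nat_smul_mem_integralPoints [Finite κ] (hA : ∀ i, A i ∈ rationalVectors n)
    {ι : Type*} [Finite ι] {r : ι → Fin n → ℝ} (hr : ∀ i, r i ∈ rationalVectors n) :
    ∃ N : ℕ, 0 < N ∧ ∀ i, (N : ℝ) • r i ∈ integralPoints A := by
  choose q hq using fun p : ι × κ => dotProduct_mem_of_mem_rationalPoints (hA p.2) (hr p.1)
  obtain ⟨N, hN, hNq⟩ := exists_nat_mul_eq_intCast q
  refine ⟨N, hN, fun i j => (hNq (i, j)).imp fun z hz => ?_⟩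
  rw [dotProduct_smul, ← hq (i, j), smul_eq_mul]
  simpa using congrArg (Rat.castHom ℝ) hz

lemma finite_setOf_dotProduct_eq_intCast [Finite κ] {B : Set (Fin n → ℝ)} (hB : IsBounded B) :
    {z : κ → ℤ | ∃ x ∈ B, ∀ i, A i ⬝ᵥ x = z i}.Finite := by
  have := Fintype.ofFinite κ
  let f : (Fin n → ℝ) →L[ℝ] (κ → ℝ) := A.mulVecLin.toContinuousLinearMap
  have hcast : Isometry (Pi.map fun _ => Int.cast : (κ → ℤ) → κ → ℝ) :=
    Isometry.piMap _ fun _ => Real.isometry_intCast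
  have hbounded : IsBounded ((Pi.map fun _ => Int.cast : (κ → ℤ) → κ → ℝ) ⁻¹' (f '' B)) :=
    hcast.antilipschitz.isBounded_preimage (f.lipschitz.isBounded_image hB)
  refine hbounded.isCompact_closure.finite_of_discrete.subset ?_
  rintro z ⟨x, hx, hxz⟩
  exact subset_closure ⟨x, hx, funext hxz⟩

lemma IsRationalPolyhedron.exists_convexHull_inter_integralPoints_eq [Finite κ]
    (hA : ∀ i, A i ∈ rationalVectors n) {B : Set (Fin n → ℝ)} (hB : IsRationalPolyhedron B)
    (hb : IsBounded B) :
    ∃ V : Set (Fin n → ℝ), V.Finite ∧ V ⊆ rationalVectors n ∧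
      convexHull ℝ (B ∩ integralPoints A) = convexHull ℝ V := by
  let Z : Set (κ → ℤ) := {z | ∃ x ∈ B, ∀ i, A i ⬝ᵥ x = z i}
  let slice (z : κ → ℤ) : Set (Fin n → ℝ) := B ∩ ⋂ i, {x | A i ⬝ᵥ x = z i}
  have hunion : B ∩ integralPoints A = ⋃ z ∈ Z, slice z := by
    ext x
    simp only [mem_iUnion, exists_prop]
    constructor
    · rintro ⟨hx, hxA⟩
      choose z hz using hxA
      exact ⟨z, ⟨x, hx, hz⟩, hx, mem_iInter.2 hz⟩
    · rintro ⟨z, -, hx, hxz⟩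
      exact ⟨hx, fun i => ⟨z i, mem_iInter.1 hxz i⟩⟩
  have hslice (z : κ → ℤ) : IsRationalPolyhedron (slice z) :=
    hB.inter (.iInter fun i => .hyperplane (hA i) (intCast_mem _ (z i)))
  choose V hV hVq hsliceV using fun z =>
    (hslice z).exists_eq_convexHull_of_isBounded (hb.subset inter_subset_left)
  refine ⟨⋃ z ∈ Z, V z, (finite_setOf_dotProduct_eq_intCast hb).biUnion fun z _ => hV z,
    iUnion₂_subset fun z _ => hVq z, ?_⟩
  simp only [hunion, hsliceV]
  exact (convexHull ℝ).closure_iSup₂_closure _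

theorem IsRationalPolyhedron.convexHull_inter_integralPoints [Finite κ]
    (hA : ∀ i, A i ∈ rationalVectors n) {Q : Set (Fin n → ℝ)} (hQ : IsRationalPolyhedron Q) :
    IsRationalPolyhedron (convexHull ℝ (Q ∩ integralPoints A)) := by
  obtain ⟨V, _, hV, hVq, hR, hRq, rfl⟩ :=
    isRationalPolyhedron_iff_exists_convexHull_add_hull.1 hQ
  obtain ⟨m, g, -, rfl⟩ := hR.fin_param
  obtain ⟨N, hN, hgN⟩ := exists_nat_smul_mem_integralPoints hA (range_subset_iff.1 hRq)
  let r := fun i => (N : ℝ) • g i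
  have hhull : hull ℝ (range r) = hull ℝ (range g) := by
    rw [range_smul, hull_smul (Nat.cast_pos.2 hN)]
  have hr (i) : r i ∈ rationalVectors n :=
    smul_mem_rationalPoints (natCast_mem _ N) (hRq (mem_range_self i))
  let B := convexHull ℝ V + parallelepiped r
  have hB : IsRationalPolyhedron B :=
    (convexHull_of_finite hV hVq).add (isRationalPolyhedron_parallelepiped hr)
  have hBb : IsBounded B :=
    (isBounded_convexHull.2 hV.isBounded).add (isCompact_parallelepiped r).isBounded
  obtain ⟨W, hW, hWq, hBW⟩ := hB.exists_convexHull_inter_integralPoints_eq hA hBb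
  refine isRationalPolyhedron_iff_exists_convexHull_add_hull.2
    ⟨W, range r, hW, hWq, finite_range r, range_subset_iff.2 hr, ?_⟩
  rw [← hhull, convexHull_add_hull_inter hgN, hBW]

end IntegralPoints

/-- For a rational polyhedron `Q` and a finite set `D ⊆ ℤⁿ`, the `D`-split closure of `Q`
is again a rational polyhedron; in particular each `conv({x ∈ Q : d·x ∈ ℤ})` is a
rational polyhedron. -/
theorem splitClosureD_isRationalPolyhedron
    {n : ℕ} (Q : Set (Fin n → ℝ)) (hQ : IsRationalPolyhedron Q)
    (D : Finset (Fin n → ℤ)) :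
    IsRationalPolyhedron (splitClosureD D Q) ∧
      ∀ d : Fin n → ℤ,
        IsRationalPolyhedron
          (convexHull ℝ {x ∈ Q | ∃ z : ℤ, ∑ i, (d i : ℝ) * x i = (z : ℝ)}) := by
  have hsplit (d : Fin n → ℤ) : IsRationalPolyhedron
      (convexHull ℝ {x ∈ Q | ∃ z : ℤ, ∑ i, (d i : ℝ) * x i = (z : ℝ)}) := by
    let A : Matrix Unit (Fin n) ℝ := fun _ i => d i
    have hA : ∀ i, A i ∈ rationalVectors n := fun _ j => intCast_mem _ (d j)
    convert hQ.convexHull_inter_integralPoints hA using 2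
    ext x
    exact and_congr_right' (forall_const Unit).symm
  refine ⟨?_, hsplit⟩
  rw [splitClosureD, ← Finset.set_biInter_coe, biInter_eq_iInter]
  exact .iInter fun d => hsplit d
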